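/- Every multigraph G on 4 vertices with exactly 19 edges, maximum edge multiplicity at most 5, and minimum degree at least 8 is strongly Z_7-connected. -/

import Mathlib

/-- The direction of edge `i` under orientation `o`: if `o i = true` the
reference direction is reversed. -/
def edir {V : Type} {m : ℕ} (ends : Fin m → V × V) (o : Fin m → Bool) (i : Fin m) : V × V :=
  if o i then ((ends i).2, (ends i).1) else ends i

/-- Contribution of edge `i` to `d⁺ - d⁻` at vertex `v`, computed in `ZMod n`. -/
def contrib {V : Type} [DecidableEq V] {m : ℕ} (n : ℕ) (ends : Fin m → V × V)
    (o : Fin m → Bool) (i : Fin m) (v : V) : ZMod n :=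
  (if (edir ends o i).1 = v then 1 else 0) - (if (edir ends o i).2 = v then 1 else 0)

/-- `d⁺_D(v) - d⁻_D(v)` in `ZMod n` for the orientation `o` of the multigraph
with edge-endpoint function `ends`. -/
def netDeg {V : Type} [DecidableEq V] {m : ℕ} (n : ℕ) (ends : Fin m → V × V)
    (o : Fin m → Bool) (v : V) : ZMod n :=
  ∑ i : Fin m, contrib n ends o i v

/-- Add `m` parallel edges with endpoint weights `x`, `y` to the bitset of
reachable weighted out-degree sums. -/
def stepE (x y : ℕ) : ℕ → ℕ → ℕ
  | 0, S => S
  | m + 1, S => stepE x y m (Nat.lor (Nat.shiftLeft S x) (Nat.shiftLeft S y))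

/-- Bitset union with its shift by `s`. -/
def foldE (s S : ℕ) : ℕ := Nat.lor S (Nat.shiftRight S s)

/-- Bitset of `r₀ + 16 r₁ + 256 r₂` with all digits below `7`. -/
def maskE : ℕ := 127 * (1 + 2 ^ 16 + 2 ^ 32 + 2 ^ 48 + 2 ^ 64 + 2 ^ 80 + 2 ^ 96) *
  (1 + 2 ^ 256 + 2 ^ 512 + 2 ^ 768 + 2 ^ 1024 + 2 ^ 1280 + 2 ^ 1536)

/-- Reachable bitset; vertices `0,1,2,3` have weights `1,16,256,0`. -/
def reachE (a b c d e f : ℕ) : ℕ :=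
  stepE 256 0 f (stepE 16 0 e (stepE 16 256 d (stepE 1 0 c (stepE 1 256 b (stepE 1 16 a 1)))))

def goodE (a b c d e f : ℕ) : Bool :=
  Nat.beq (Nat.land (foldE 1792 (foldE 112 (foldE 7 (reachE a b c d e f)))) maskE) maskE

def condE (a b c d e f : ℕ) : Bool :=
  Nat.beq (a + b + c + d + e + f) 19 && Nat.ble f 5 && Nat.ble 8 (a + b + c) &&
    Nat.ble 8 (a + d + e) && Nat.ble 8 (b + d + f) && Nat.ble 8 (c + e + f)

def allE : ℕ → (ℕ → Bool) → Bool
  | 0, _ => true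
  | n + 1, p => p n && allE n p

theorem allE_spec (n : ℕ) (p : ℕ → Bool) (h : allE n p = true) : ∀ k < n, p k = true := by
  induction n with
  | zero => intro k hk; omega
  | succ n ih =>
    simp only [allE, Bool.and_eq_true] at h
    intro k hk
    rcases Nat.lt_succ_iff_lt_or_eq.mp hk with h1 | h1
    · exact ih h.2 k h1
    · rw [h1]; exact h.1

def checkE (a b c d e : ℕ) : Bool :=
  !condE a b c d e (19 - (a + b + c + d + e)) || goodE a b c d e (19 - (a + b + c + d + e))

theorem check_all : allE 6 (fun a => allE 6 fun b => allE 6 fun c => allE 6 fun d => allE 6 fun e =>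
    checkE a b c d e) = true := by
  decide +kernel

theorem stepE_spec (x y m S n : ℕ) (h : (stepE x y m S).testBit n = true) :
    ∃ k l n', k + l = m ∧ n = n' + k * x + l * y ∧ S.testBit n' = true := by
  induction m generalizing S with
  | zero => exact ⟨0, 0, n, rfl, by simp, h⟩
  | succ m ih =>
    obtain ⟨k, l, n', h1, h2, h3⟩ := ih _ h
    have h4 : ((S <<< x) ||| (S <<< y)).testBit n' = true := h3
    rw [Nat.testBit_or, Nat.testBit_shiftLeft, Nat.testBit_shiftLeft] at h4
    simp only [Bool.or_eq_true, Bool.and_eq_true, decide_eq_true_eq] at h4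
    rcases h4 with ⟨h5, h6⟩ | ⟨h5, h6⟩
    · refine ⟨k + 1, l, n' - x, by omega, ?_, h6⟩
      rw [h2, add_mul]; omega
    · refine ⟨k, l + 1, n' - y, by omega, ?_, h6⟩
      rw [h2, add_mul]; omega

theorem foldE_spec (s S n : ℕ) (h : (foldE s S).testBit n = true) :
    ∃ i ≤ 1, S.testBit (n + s * i) = true := by
  have h4 : (S ||| (S >>> s)).testBit n = true := h
  rw [Nat.testBit_or, Nat.testBit_shiftRight] at h4
  simp only [Bool.or_eq_true] at h4
  rcases h4 with h5 | h5
  · exact ⟨0, by omega, by simpa using h5⟩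
  · exact ⟨1, le_rfl, by rw [mul_one, add_comm]; exact h5⟩

theorem mask_all : ∀ a < 7, ∀ b < 7, ∀ c < 7, maskE.testBit (a + 16 * b + 256 * c) = true := by
  decide +kernel

theorem allE_spec5 (p : ℕ → ℕ → ℕ → ℕ → ℕ → Bool)
    (h : allE 6 (fun a => allE 6 fun b => allE 6 fun c => allE 6 fun d => allE 6 fun e =>
      p a b c d e) = true) (a b c d e : ℕ) (ha : a < 6) (hb : b < 6) (hc : c < 6) (hd : d < 6)
    (he : e < 6) : p a b c d e = true := by
  have h1 := allE_spec 6 _ h a ha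
  have h2 := allE_spec 6 _ h1 b hb
  have h3 := allE_spec 6 _ h2 c hc
  have h4 := allE_spec 6 _ h3 d hd
  exact allE_spec 6 _ h4 e he

theorem mask_spec (T M n : ℕ) (h : Nat.beq (Nat.land T M) M = true) (hM : M.testBit n = true) :
    T.testBit n = true := by
  have h1 : T &&& M = M := Nat.eq_of_beq_eq_true h
  rw [← h1, Nat.testBit_and, Bool.and_eq_true] at hM
  exact hM.1

theorem digits_eq (x y z x' y' z' : ℕ) (h : x + 16 * y + 256 * z = x' + 16 * y' + 256 * z')
    (hx : x < 16) (hy : y < 16) (hx' : x' < 16) (hy' : y' < 16) : x = x' ∧ y = y' ∧ z = z' := by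
  omega

/-- The combinatorial core: numbers of edges of each class leaving the smaller endpoint. -/
theorem core (a b c d e f : ℕ) (ha : a ≤ 5) (hb : b ≤ 5) (hc : c ≤ 5) (hd : d ≤ 5) (he : e ≤ 5)
    (hf : f ≤ 5) (hs : a + b + c + d + e + f = 19) (h0 : 8 ≤ a + b + c) (h1 : 8 ≤ a + d + e)
    (h2 : 8 ≤ b + d + f) (h3 : 8 ≤ c + e + f) (r0 r1 r2 : ℕ) (hr0 : r0 < 7) (hr1 : r1 < 7)
    (hr2 : r2 < 7) :
    ∃ ka la kb lb kc lc kd ld ke le kf lf i0 i1 i2 : ℕ,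
      ka + la = a ∧ kb + lb = b ∧ kc + lc = c ∧ kd + ld = d ∧ ke + le = e ∧ kf + lf = f ∧
      ka + kb + kc = r0 + 7 * i0 ∧ la + kd + ke = r1 + 7 * i1 ∧ lb + ld + kf = r2 + 7 * i2 := by
  have h : checkE a b c d e = true := allE_spec5 checkE check_all a b c d e (by omega) (by omega)
    (by omega) (by omega) (by omega)
  have hfe : 19 - (a + b + c + d + e) = f := by omega
  have hcond : condE a b c d e f = true := by
    unfold condE
    simp only [Bool.and_eq_true, Nat.ble_eq, Nat.beq_eq]
    omega
  unfold checkE at h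
  rw [hfe, hcond, Bool.not_true, Bool.false_or] at h
  unfold goodE at h
  have hm := mask_spec _ _ _ h (mask_all r0 hr0 r1 hr1 r2 hr2)
  obtain ⟨i2, hi2, t1⟩ := foldE_spec _ _ _ hm
  obtain ⟨i1, hi1, t2⟩ := foldE_spec _ _ _ t1
  obtain ⟨i0, hi0, t3⟩ := foldE_spec _ _ _ t2
  unfold reachE at t3
  obtain ⟨kf, lf, n1, e1, q1, t4⟩ := stepE_spec _ _ _ _ _ t3
  obtain ⟨ke, le, n2, e2, q2, t5⟩ := stepE_spec _ _ _ _ _ t4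
  obtain ⟨kd, ld, n3, e3, q3, t6⟩ := stepE_spec _ _ _ _ _ t5
  obtain ⟨kc, lc, n4, e4, q4, t7⟩ := stepE_spec _ _ _ _ _ t6
  obtain ⟨kb, lb, n5, e5, q5, t8⟩ := stepE_spec _ _ _ _ _ t7
  obtain ⟨ka, la, n6, e6, q6, t9⟩ := stepE_spec _ _ _ _ _ t8
  have hn6 : n6 = 0 := by simpa [Nat.testBit_one_eq_true_iff_self_eq_zero] using t9
  clear h hm t1 t2 t3 t4 t5 t6 t7 t8 t9 hcond
  have key : (ka + kb + kc) + 16 * (la + kd + ke) + 256 * (lb + ld + kf)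
      = (r0 + 7 * i0) + 16 * (r1 + 7 * i1) + 256 * (r2 + 7 * i2) := by
    subst hn6
    linarith
  have u0 : ka + kb + kc < 16 := by clear key q1 q2 q3 q4 q5 q6; omega
  have u1 : la + kd + ke < 16 := by clear key q1 q2 q3 q4 q5 q6; omega
  obtain ⟨w0, w1, w2⟩ := digits_eq _ _ _ _ _ _ key u0 u1 (by clear key q1 q2 q3 q4 q5 q6; omega)
    (by clear key q1 q2 q3 q4 q5 q6; omega)
  exact ⟨ka, la, kb, lb, kc, lc, kd, ld, ke, le, kf, lf, i0, i1, i2,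
    e6, e5, e4, e3, e2, e1, w0, w1, w2⟩

/-- Sorted endpoint pair. -/
def clsE (ends : Fin 19 → Fin 4 × Fin 4) (i : Fin 19) : Fin 4 × Fin 4 :=
  (min (ends i).1 (ends i).2, max (ends i).1 (ends i).2)

/-- Edges between `u` and `v`. -/
def CE (ends : Fin 19 → Fin 4 × Fin 4) (u v : Fin 4) : Finset (Fin 19) :=
  Finset.univ.filter (fun i => clsE ends i = (u, v))

theorem pair_facts : ∀ p : Fin 4 × Fin 4, ∀ u v : Fin 4, u < v →
    ((min p.1 p.2, max p.1 p.2) = (u, v) ↔ (p = (u, v) ∨ p = (v, u))) := by decide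

theorem CE_empty (ends : Fin 19 → Fin 4 × Fin 4) (hl : ∀ i, (ends i).1 ≠ (ends i).2)
    (u v : Fin 4) (h : ¬ u < v) : CE ends u v = ∅ := by
  have key : ∀ p : Fin 4 × Fin 4, p.1 ≠ p.2 → ∀ u v : Fin 4, ¬ u < v →
    (min p.1 p.2, max p.1 p.2) ≠ (u, v) := by decide
  exact Finset.filter_eq_empty_iff.mpr fun i _ => key _ (hl i) _ _ h

theorem sum_split {M : Type} [AddCommMonoid M] (ends : Fin 19 → Fin 4 × Fin 4)
    (hl : ∀ i, (ends i).1 ≠ (ends i).2) (g : Fin 19 → M) :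
    ∑ i, g i = ∑ i ∈ CE ends 0 1, g i + ∑ i ∈ CE ends 0 2, g i + ∑ i ∈ CE ends 0 3, g i +
      ∑ i ∈ CE ends 1 2, g i + ∑ i ∈ CE ends 1 3, g i + ∑ i ∈ CE ends 2 3, g i := by
  have h := Finset.sum_fiberwise (s := Finset.univ) (g := clsE ends) (f := g)
  rw [← h, Fintype.sum_prod_type]
  have h' : ∀ u v, ∑ i with clsE ends i = (u, v), g i = ∑ i ∈ CE ends u v, g i := fun _ _ => rfl
  simp only [h', Fin.sum_univ_four]
  have hz : ∀ u v : Fin 4, ¬ u < v → ∑ i ∈ CE ends u v, g i = 0 := by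
    intro u v huv
    rw [CE_empty ends hl u v huv, Finset.sum_empty]
  rw [hz 0 0 (by decide), hz 1 0 (by decide), hz 1 1 (by decide), hz 2 0 (by decide),
    hz 2 1 (by decide), hz 2 2 (by decide), hz 3 0 (by decide), hz 3 1 (by decide),
    hz 3 2 (by decide), hz 3 3 (by decide)]
  simp only [zero_add, add_zero]
  simp only [add_assoc]

theorem deg_eq (ends : Fin 19 → Fin 4 × Fin 4) (hl : ∀ i, (ends i).1 ≠ (ends i).2) (w : Fin 4) :
    (Finset.univ.filter (fun i => (ends i).1 = w ∨ (ends i).2 = w)).card =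
      (if 0 = w ∨ 1 = w then (CE ends 0 1).card else 0) +
      (if 0 = w ∨ 2 = w then (CE ends 0 2).card else 0) +
      (if 0 = w ∨ 3 = w then (CE ends 0 3).card else 0) +
      (if 1 = w ∨ 2 = w then (CE ends 1 2).card else 0) +
      (if 1 = w ∨ 3 = w then (CE ends 1 3).card else 0) +
      (if 2 = w ∨ 3 = w then (CE ends 2 3).card else 0) := by
  rw [Finset.card_filter, sum_split ends hl]
  have key : ∀ u v : Fin 4, u < v →
      ∑ i ∈ CE ends u v, (if (ends i).1 = w ∨ (ends i).2 = w then 1 else 0) =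
      if u = w ∨ v = w then (CE ends u v).card else 0 := by
    intro u v huv
    have : ∀ i ∈ CE ends u v, (if (ends i).1 = w ∨ (ends i).2 = w then 1 else 0) =
        if u = w ∨ v = w then 1 else 0 := by
      intro i hi
      have hi' := (Finset.mem_filter.mp hi).2
      rcases (pair_facts (ends i) u v huv).mp hi' with h | h
      · rw [h]
      · rw [h]; simp only [or_comm]
    rw [Finset.sum_congr rfl this]
    split_ifs <;> simp
  rw [key 0 1 (by decide), key 0 2 (by decide), key 0 3 (by decide), key 1 2 (by decide),
    key 1 3 (by decide), key 2 3 (by decide)]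

/-- Orientation in which the edges of `A` leave their smaller endpoint and the
others leave their larger endpoint. -/
def orE (ends : Fin 19 → Fin 4 × Fin 4) (A : Finset (Fin 19)) (i : Fin 19) : Bool :=
  if i ∈ A then decide ((ends i).2 < (ends i).1) else decide ((ends i).1 < (ends i).2)

theorem class_sum (ends : Fin 19 → Fin 4 × Fin 4) (A : Finset (Fin 19)) (u v : Fin 4)
    (huv : u < v) (k l : ℕ) (hk : (CE ends u v ∩ A).card = k)
    (hkl : k + l = (CE ends u v).card) (w : Fin 4) :
    ∑ i ∈ CE ends u v, contrib 7 ends (orE ends A) i w =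
      ((k : ZMod 7) - l) * ((if u = w then 1 else 0) - (if v = w then 1 else 0)) := by
  have hl : (CE ends u v \ A).card = l := by
    have := Finset.card_inter_add_card_sdiff (CE ends u v) A
    omega
  rw [← Finset.sum_inter_add_sum_sdiff (CE ends u v) A]
  have e1 : ∀ i ∈ CE ends u v ∩ A, contrib 7 ends (orE ends A) i w =
      ((if u = w then 1 else 0) - (if v = w then 1 else 0)) := by
    intro i hi
    obtain ⟨hi1, hi2⟩ := Finset.mem_inter.mp hi
    have hi' := (Finset.mem_filter.mp hi1).2
    rcases (pair_facts (ends i) u v huv).mp hi' with h | h <;>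
      simp [contrib, edir, orE, hi2, h, huv, huv.not_gt]
  have e2 : ∀ i ∈ CE ends u v \ A, contrib 7 ends (orE ends A) i w =
      -((if u = w then 1 else 0) - (if v = w then 1 else 0)) := by
    intro i hi
    obtain ⟨hi1, hi2⟩ := Finset.mem_sdiff.mp hi
    have hi' := (Finset.mem_filter.mp hi1).2
    rcases (pair_facts (ends i) u v huv).mp hi' with h | h <;>
      simp [contrib, edir, orE, hi2, h, huv, huv.not_gt]
  rw [Finset.sum_congr rfl e1, Finset.sum_congr rfl e2, Finset.sum_const, Finset.sum_const, hk, hl]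
  simp only [nsmul_eq_mul]
  ring

theorem CE_disj (ends : Fin 19 → Fin 4 × Fin 4) (u v u' v' : Fin 4) (h : (u, v) ≠ (u', v'))
    (A : Finset (Fin 19)) (hA : A ⊆ CE ends u' v') : CE ends u v ∩ A = ∅ := by
  ext i
  simp only [Finset.mem_inter, Finset.notMem_empty, iff_false, not_and]
  intro h1 h2
  exact h (((Finset.mem_filter.mp h1).2).symm.trans (Finset.mem_filter.mp (hA h2)).2)

theorem res_exists (x : ZMod 7) : ∃ r : ℕ, r < 7 ∧ 2 * (r : ZMod 7) = x := by
  revert x; decide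

theorem four_vertex_19_edges_strongly_Z7_connected
    (ends : Fin 19 → Fin 4 × Fin 4)
    (hloopless : ∀ i, (ends i).1 ≠ (ends i).2)
    (hmult : ∀ u v : Fin 4, u ≠ v →
      (Finset.univ.filter (fun i => ends i = (u, v) ∨ ends i = (v, u))).card ≤ 5)
    (hdeg : ∀ v : Fin 4,
      8 ≤ (Finset.univ.filter (fun i => (ends i).1 = v ∨ (ends i).2 = v)).card)
    (β : Fin 4 → ZMod 7) (hβ : ∑ v : Fin 4, β v = 0) :
    ∃ o : Fin 19 → Bool, ∀ v : Fin 4, netDeg 7 ends o v = β v := by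
  have sevn : (7 : ZMod 7) = 0 := by decide
  have hb : ∀ u v : Fin 4, u < v → (CE ends u v).card ≤ 5 := by
    intro u v huv
    have h := hmult u v huv.ne
    have he : CE ends u v = Finset.univ.filter (fun i => ends i = (u, v) ∨ ends i = (v, u)) := by
      ext i
      unfold CE
      rw [Finset.mem_filter, Finset.mem_filter]
      simp only [Finset.mem_univ, true_and]
      exact pair_facts (ends i) u v huv
    rw [he]; exact h
  have htot := sum_split ends hloopless (fun _ => 1)
  simp only [Finset.sum_const, smul_eq_mul, mul_one, Finset.card_univ, Fintype.card_fin] at htot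
  have d0 := hdeg 0
  have d1 := hdeg 1
  have d2 := hdeg 2
  have d3 := hdeg 3
  rw [deg_eq ends hloopless] at d0 d1 d2 d3
  simp [-Finset.card_pos] at d0 d1 d2 d3
  have b01 := hb 0 1 (by decide)
  have b02 := hb 0 2 (by decide)
  have b03 := hb 0 3 (by decide)
  have b12 := hb 1 2 (by decide)
  have b13 := hb 1 3 (by decide)
  have b23 := hb 2 3 (by decide)
  obtain ⟨r0, hr0, s0⟩ := res_exists (β 0 + (((CE ends 0 1).card + (CE ends 0 2).card +
    (CE ends 0 3).card : ℕ) : ZMod 7))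
  obtain ⟨r1, hr1, s1⟩ := res_exists (β 1 + (((CE ends 0 1).card + (CE ends 1 2).card +
    (CE ends 1 3).card : ℕ) : ZMod 7))
  obtain ⟨r2, hr2, s2⟩ := res_exists (β 2 + (((CE ends 0 2).card + (CE ends 1 2).card +
    (CE ends 2 3).card : ℕ) : ZMod 7))
  obtain ⟨ka, la, kb, lb, kc, lc, kd, ld, ke, le, kf, lf, i0, i1, i2, ea, eb, ec, ed, ee, ef,
    q0, q1, q2⟩ := core _ _ _ _ _ _ b01 b02 b03 b12 b13 b23 (by omega) (by omega) (by omega)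
      (by omega) (by omega) r0 r1 r2 hr0 hr1 hr2
  obtain ⟨A01, hA01, cA01⟩ := Finset.exists_subset_card_eq (show ka ≤ (CE ends 0 1).card by omega)
  obtain ⟨A02, hA02, cA02⟩ := Finset.exists_subset_card_eq (show kb ≤ (CE ends 0 2).card by omega)
  obtain ⟨A03, hA03, cA03⟩ := Finset.exists_subset_card_eq (show kc ≤ (CE ends 0 3).card by omega)
  obtain ⟨A12, hA12, cA12⟩ := Finset.exists_subset_card_eq (show kd ≤ (CE ends 1 2).card by omega)
  obtain ⟨A13, hA13, cA13⟩ := Finset.exists_subset_card_eq (show ke ≤ (CE ends 1 3).card by omega)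
  obtain ⟨A23, hA23, cA23⟩ := Finset.exists_subset_card_eq (show kf ≤ (CE ends 2 3).card by omega)
  have hdis : ∀ u v, (u, v) ≠ ((0 : Fin 4), (1 : Fin 4)) → CE ends u v ∩ A01 = ∅ :=
    fun u v h => CE_disj ends u v 0 1 h A01 hA01
  have hdis2 : ∀ u v, (u, v) ≠ ((0 : Fin 4), (2 : Fin 4)) → CE ends u v ∩ A02 = ∅ :=
    fun u v h => CE_disj ends u v 0 2 h A02 hA02
  have hdis3 : ∀ u v, (u, v) ≠ ((0 : Fin 4), (3 : Fin 4)) → CE ends u v ∩ A03 = ∅ :=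
    fun u v h => CE_disj ends u v 0 3 h A03 hA03
  have hdis4 : ∀ u v, (u, v) ≠ ((1 : Fin 4), (2 : Fin 4)) → CE ends u v ∩ A12 = ∅ :=
    fun u v h => CE_disj ends u v 1 2 h A12 hA12
  have hdis5 : ∀ u v, (u, v) ≠ ((1 : Fin 4), (3 : Fin 4)) → CE ends u v ∩ A13 = ∅ :=
    fun u v h => CE_disj ends u v 1 3 h A13 hA13
  have hdis6 : ∀ u v, (u, v) ≠ ((2 : Fin 4), (3 : Fin 4)) → CE ends u v ∩ A23 = ∅ :=
    fun u v h => CE_disj ends u v 2 3 h A23 hA23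
  obtain ⟨A, hA⟩ : ∃ A, A = A01 ∪ A02 ∪ A03 ∪ A12 ∪ A13 ∪ A23 := ⟨_, rfl⟩
  have c01 : (CE ends 0 1 ∩ A).card = ka := by
    rw [hA]
    simp only [Finset.inter_union_distrib_left]
    rw [hdis2 _ _ (by decide), hdis3 _ _ (by decide), hdis4 _ _ (by decide),
      hdis5 _ _ (by decide), hdis6 _ _ (by decide), Finset.inter_eq_right.mpr hA01]
    simpa using cA01
  have c02 : (CE ends 0 2 ∩ A).card = kb := by
    rw [hA]
    simp only [Finset.inter_union_distrib_left]
    rw [hdis _ _ (by decide), hdis3 _ _ (by decide), hdis4 _ _ (by decide),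
      hdis5 _ _ (by decide), hdis6 _ _ (by decide), Finset.inter_eq_right.mpr hA02]
    simpa using cA02
  have c03 : (CE ends 0 3 ∩ A).card = kc := by
    rw [hA]
    simp only [Finset.inter_union_distrib_left]
    rw [hdis _ _ (by decide), hdis2 _ _ (by decide), hdis4 _ _ (by decide),
      hdis5 _ _ (by decide), hdis6 _ _ (by decide), Finset.inter_eq_right.mpr hA03]
    simpa using cA03
  have c12 : (CE ends 1 2 ∩ A).card = kd := by
    rw [hA]
    simp only [Finset.inter_union_distrib_left]
    rw [hdis _ _ (by decide), hdis2 _ _ (by decide), hdis3 _ _ (by decide),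
      hdis5 _ _ (by decide), hdis6 _ _ (by decide), Finset.inter_eq_right.mpr hA12]
    simpa using cA12
  have c13 : (CE ends 1 3 ∩ A).card = ke := by
    rw [hA]
    simp only [Finset.inter_union_distrib_left]
    rw [hdis _ _ (by decide), hdis2 _ _ (by decide), hdis3 _ _ (by decide),
      hdis4 _ _ (by decide), hdis6 _ _ (by decide), Finset.inter_eq_right.mpr hA13]
    simpa using cA13
  have c23 : (CE ends 2 3 ∩ A).card = kf := by
    rw [hA]
    simp only [Finset.inter_union_distrib_left]
    rw [hdis _ _ (by decide), hdis2 _ _ (by decide), hdis3 _ _ (by decide),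
      hdis4 _ _ (by decide), hdis5 _ _ (by decide), Finset.inter_eq_right.mpr hA23]
    simpa using cA23
  rw [← ea, ← eb, ← ec] at s0
  rw [← ea, ← ed, ← ee] at s1
  rw [← eb, ← ed, ← ef] at s2
  have z0 := congrArg (Nat.cast : ℕ → ZMod 7) q0
  have z1 := congrArg (Nat.cast : ℕ → ZMod 7) q1
  have z2 := congrArg (Nat.cast : ℕ → ZMod 7) q2
  push_cast at s0 s1 s2 z0 z1 z2
  rw [sevn] at z0 z1 z2
  rw [Fin.sum_univ_four] at hβ
  refine ⟨orE ends A, fun w => ?_⟩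
  unfold netDeg
  rw [sum_split ends hloopless,
    class_sum ends A 0 1 (by decide) ka la c01 ea w,
    class_sum ends A 0 2 (by decide) kb lb c02 eb w,
    class_sum ends A 0 3 (by decide) kc lc c03 ec w,
    class_sum ends A 1 2 (by decide) kd ld c12 ed w,
    class_sum ends A 1 3 (by decide) ke le c13 ee w,
    class_sum ends A 2 3 (by decide) kf lf c23 ef w]
  fin_cases w
  · simp
    linear_combination 2 * z0 + s0
  · simp
    linear_combination 2 * z1 + s1
  · simp
    linear_combination 2 * z2 + s2
  · simp
    linear_combination -2 * z0 - 2 * z1 - 2 * z2 - s0 - s1 - s2 - hβ
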